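/- For the heat-bath rates, setting λ(k) = α(k) − α(k−1) for k ≥ 0, one has Σ_{k≥0} |V_0(k)|·λ(k) = (2d+1)·(1 − Σ_{a∈A} min_{w∈A^{∂0}} Q(a,w)). In particular, Σ_{k≥0} |V_0(k)|·λ(k) < 1 if and only if Σ_{a∈A} min_{w∈A^{∂0}} Q(a,w) > 2d/(2d+1). -/

import Mathlib

open scoped BigOperators

/-- The L¹-norm on `ℤ^d`. -/
def norm1 {d : ℕ} (x : Fin d → ℤ) : ℤ := ∑ u, |x u|

/-- The boundary `∂0` of the origin: the sites of `ℤ^d` at L¹-distance `1`. -/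
def Bdry (d : ℕ) : Type := {j : Fin d → ℤ // norm1 j = 1}

/-- The heat-bath rates: `c_0(a,ζ) = Q(a, ζ(∂0))`. -/
def hbRate {d : ℕ} {A : Type*} (Q : A → (Bdry d → A) → ℝ)
    (a : A) (ζ : (Fin d → ℤ) → A) : ℝ :=
  Q a (fun j => ζ j.1)

/-- `α(-1)` for the heat-bath rates. -/
noncomputable def alphaNeg {d : ℕ} {A : Type*} [Fintype A] [DecidableEq A]
    (Q : A → (Bdry d → A) → ℝ) : ℝ :=
  ∑ a : A,
    min (sInf {x | ∃ ζ : (Fin d → ℤ) → A, ζ 0 ≠ a ∧ hbRate Q a ζ = x})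
      (1 - sSup {x | ∃ ζ : (Fin d → ℤ) → A, ζ 0 = a ∧
        (∑ b ∈ ({a}ᶜ : Finset A), hbRate Q b ζ) = x})

/-- `α(k)`, `k ≥ 0`, for the heat-bath rates: the minimum over `w ∈ A^{V_0(k)}` of
`Σ_{a ≠ w(0)} inf_{ζ(V_0(k)) = w} c_0(a,ζ) + 1 - sup_{ζ(V_0(k)) = w} Σ_{b ≠ w(0)} c_0(b,ζ)`,
the minimum over `w` being expressed as the infimum over configurations `η` (the
bracketed quantity depends only on `η(V_0(k))`). -/
noncomputable def alphaHB {d : ℕ} {A : Type*} [Fintype A] [DecidableEq A]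
    (Q : A → (Bdry d → A) → ℝ) (k : ℕ) : ℝ :=
  sInf {x | ∃ η : (Fin d → ℤ) → A,
    ((∑ a ∈ ({η 0}ᶜ : Finset A),
        sInf {y | ∃ ζ : (Fin d → ℤ) → A,
          (∀ j : Fin d → ℤ, norm1 j ≤ (k : ℤ) → ζ j = η j) ∧ hbRate Q a ζ = y})
      + 1
      - sSup {y | ∃ ζ : (Fin d → ℤ) → A,
          (∀ j : Fin d → ℤ, norm1 j ≤ (k : ℤ) → ζ j = η j) ∧
          (∑ b ∈ ({η 0}ᶜ : Finset A), hbRate Q b ζ) = y}) = x}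

/-- `λ(k) = α(k) - α(k-1)` for `k ≥ 0` (with `α(-1) = alphaNeg Q`). -/
noncomputable def lamHB {d : ℕ} {A : Type*} [Fintype A] [DecidableEq A]
    (Q : A → (Bdry d → A) → ℝ) (k : ℕ) : ℝ :=
  if k = 0 then alphaHB Q 0 - alphaNeg Q else alphaHB Q k - alphaHB Q (k - 1)

/-! The constants `α(k)` become explicit once `1 - sup Σ_{b ≠ a} c_0(b, ·)` is rewritten as
`inf c_0(a, ·)`, by normalisation: then `α(-1)` and `α(k)` are built from the infima of the rates
alone. Fixing `ζ(0)` leaves `ζ(∂0)` free, so `α(-1) = α(0) = Σ_a min_w Q(a, w)`. Fixing `ζ` on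
`V_0(k)` with `k ≥ 1` determines `ζ(∂0)`, hence every rate, so `α(k) = 1`. Thus `λ` is supported
at `k = 1`, where `|V_0(1)| = 2d + 1`. -/

section Lattice

variable {d : ℕ}

theorem norm1_nonneg (x : Fin d → ℤ) : 0 ≤ norm1 x :=
  Finset.sum_nonneg fun _ _ => abs_nonneg _

theorem norm1_eq_zero_iff {x : Fin d → ℤ} : norm1 x = 0 ↔ x = 0 := by
  simp [norm1, Finset.sum_eq_zero_iff_of_nonneg, funext_iff]

theorem norm1_le_zero_iff {x : Fin d → ℤ} : norm1 x ≤ 0 ↔ x = 0 := by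
  rw [← norm1_eq_zero_iff, (norm1_nonneg x).ge_iff_eq']

theorem norm1_single (i : Fin d) (n : ℤ) : norm1 (Pi.single i n) = |n| := by
  simp [norm1, Pi.single_apply, apply_ite abs]

theorem norm1_eq_abs_add_norm1_sub_single (x : Fin d → ℤ) (i : Fin d) :
    norm1 x = |x i| + norm1 (x - Pi.single i (x i)) := by
  have erase_eq (u : Fin d) (hu : u ∈ Finset.univ.erase i) :
      |(x - Pi.single i (x i) : Fin d → ℤ) u| = |x u| := by
    simp [Pi.single_eq_of_ne (Finset.ne_of_mem_erase hu)]
  have rest_eq : norm1 (x - Pi.single i (x i)) = ∑ u ∈ Finset.univ.erase i, |x u| := by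
    rw [norm1, ← Finset.add_sum_erase _ _ (Finset.mem_univ i), Finset.sum_congr rfl erase_eq]
    simp
  rw [rest_eq, norm1, Finset.add_sum_erase _ (fun u => |x u|) (Finset.mem_univ i)]

theorem norm1_eq_one_iff {x : Fin d → ℤ} :
    norm1 x = 1 ↔ ∃ (i : Fin d) (s : ℤˣ), Pi.single i (s : ℤ) = x := by
  constructor
  · intro hx
    have hx0 : x ≠ 0 := fun h => by simp [norm1_eq_zero_iff.2 h] at hx
    obtain ⟨i, hi⟩ := Function.ne_iff.1 hx0
    have one_le : 1 ≤ |x i| := Int.one_le_abs hi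
    have split := norm1_eq_abs_add_norm1_sub_single x i
    have rest_nonneg := norm1_nonneg (x - Pi.single i (x i))
    have rest_eq : x - Pi.single i (x i) = 0 := norm1_le_zero_iff.1 (by lia)
    obtain ⟨s, hs⟩ : IsUnit (x i) := Int.isUnit_iff_abs_eq.2 (by lia)
    exact ⟨i, s, by rw [hs, ← sub_eq_zero.1 rest_eq]⟩
  · rintro ⟨i, s, rfl⟩
    rw [norm1_single, Int.isUnit_iff_abs_eq.1 s.isUnit]

theorem single_unit_injective :
    Function.Injective fun p : Fin d × ℤˣ => (Pi.single p.1 (p.2 : ℤ) : Fin d → ℤ) := by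
  rintro ⟨i, s⟩ ⟨i', s'⟩ h
  obtain rfl : i = i' := by
    by_contra hne
    simpa [hne] using congrFun h i
  simpa [Units.ext_iff] using h

theorem setOf_norm1_eq_one :
    {x : Fin d → ℤ | norm1 x = 1} =
      Set.range fun p : Fin d × ℤˣ => (Pi.single p.1 (p.2 : ℤ) : Fin d → ℤ) := by
  ext x
  simp [norm1_eq_one_iff]

theorem finite_setOf_norm1_eq_one : {x : Fin d → ℤ | norm1 x = 1}.Finite :=
  setOf_norm1_eq_one ▸ Set.finite_range _

instance : Finite (Bdry d) :=
  finite_setOf_norm1_eq_one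

theorem ncard_setOf_norm1_eq_one : {x : Fin d → ℤ | norm1 x = 1}.ncard = 2 * d := by
  rw [setOf_norm1_eq_one, Set.ncard_range_of_injective single_unit_injective]
  simp [Nat.card_eq_fintype_card, mul_comm]

theorem ncard_setOf_norm1_le_one : {x : Fin d → ℤ | norm1 x ≤ 1}.ncard = 2 * d + 1 := by
  have ball_eq : {x : Fin d → ℤ | norm1 x ≤ 1} = insert 0 {x | norm1 x = 1} := by
    ext x
    rw [Set.mem_insert_iff, ← norm1_eq_zero_iff, Set.mem_ofPred_eq, Set.mem_ofPred_eq]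
    have := norm1_nonneg x
    lia
  rw [ball_eq, Set.ncard_insert_of_notMem (by simp [norm1_eq_zero_iff.2])
    finite_setOf_norm1_eq_one, ncard_setOf_norm1_eq_one]

end Lattice

section Configuration

variable {d : ℕ} {A : Type*}

/-- The cylinder of configurations which agree with `η` on the ball `V_0(k)`. -/
def cylinder (k : ℕ) (η : (Fin d → ℤ) → A) : Set ((Fin d → ℤ) → A) :=
  {ζ | ∀ j : Fin d → ℤ, norm1 j ≤ (k : ℤ) → ζ j = η j}

theorem self_mem_cylinder (k : ℕ) (η : (Fin d → ℤ) → A) : η ∈ cylinder k η :=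
  fun _ _ => rfl

theorem cylinder_zero (η : (Fin d → ℤ) → A) : cylinder 0 η = {ζ | ζ 0 ∈ ({η 0} : Set A)} := by
  ext ζ
  simp [cylinder, norm1_le_zero_iff]

theorem exists_extension_of_bdry (w : Bdry d → A) (a : A) :
    ∃ ζ : (Fin d → ℤ) → A, ζ 0 = a ∧ (fun j : Bdry d => ζ j.1) = w := by
  refine ⟨Function.extend (fun j : Bdry d => j.1) w fun _ => a, ?_,
    Function.extend_comp Subtype.val_injective _ _⟩
  refine Function.extend_apply' _ _ _ ?_
  rintro ⟨j, hj⟩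
  have : norm1 j.1 = 1 := j.2
  simp [hj, norm1_eq_zero_iff.2] at this

end Configuration

section HeatBath

variable {d : ℕ} {A : Type*} (Q : A → (Bdry d → A) → ℝ)

theorem image_hbRate_origin_mem (a : A) {B : Set A} (hB : B.Nonempty) :
    hbRate Q a '' {ζ | ζ 0 ∈ B} = Set.range (Q a) := by
  refine Set.Subset.antisymm (Set.image_subset_iff.2 fun ζ _ => ⟨_, rfl⟩) ?_
  rintro _ ⟨w, rfl⟩
  obtain ⟨c, hc⟩ := hB
  obtain ⟨ζ, rfl, hζw⟩ := exists_extension_of_bdry w c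
  exact ⟨ζ, hc, congrArg (Q a) hζw⟩

theorem image_hbRate_cylinder (a : A) {k : ℕ} (hk : 1 ≤ k) (η : (Fin d → ℤ) → A) :
    hbRate Q a '' cylinder k η = {hbRate Q a η} := by
  have rate_eq : ∀ ζ ∈ cylinder k η, hbRate Q a ζ = hbRate Q a η := fun ζ hζ =>
    congrArg (Q a) <| funext fun j => hζ j.1 <| j.2.trans_le (mod_cast hk)
  rw [Set.image_congr rate_eq, Set.Nonempty.image_const ⟨η, self_mem_cylinder k η⟩]

theorem bddBelow_image_hbRate [Finite A] (a : A) (S : Set ((Fin d → ℤ) → A)) :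
    BddBelow (hbRate Q a '' S) :=
  ((Set.finite_range (Q a)).subset (Set.image_subset_iff.2 fun _ _ => ⟨_, rfl⟩)).bddBelow

variable [Fintype A] [DecidableEq A] {Q}

theorem sum_compl_hbRate (hQsum : ∀ w, ∑ a, Q a w = 1) (a : A) (ζ : (Fin d → ℤ) → A) :
    ∑ b ∈ ({a}ᶜ : Finset A), hbRate Q b ζ = 1 - hbRate Q a ζ := by
  rw [eq_sub_iff_add_eq', ← Fintype.sum_eq_add_sum_compl a fun b => hbRate Q b ζ]
  exact hQsum _

theorem one_sub_sSup_image_sum_compl_hbRate (hQsum : ∀ w, ∑ a, Q a w = 1) (a : A)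
    {S : Set ((Fin d → ℤ) → A)} (hS : S.Nonempty) :
    1 - sSup ((fun ζ => ∑ b ∈ ({a}ᶜ : Finset A), hbRate Q b ζ) '' S)
      = sInf (hbRate Q a '' S) := by
  have antitone_one_sub : Antitone fun x : ℝ => 1 - x := fun _ _ h => sub_le_sub_left h 1
  simp_rw [sum_compl_hbRate hQsum]
  rw [← Set.image_image (fun x : ℝ => 1 - x), ← antitone_one_sub.map_csInf_of_continuousAt
    (by fun_prop) (hS.image _) (bddBelow_image_hbRate Q a S), sub_sub_cancel]

theorem alphaNeg_eq_sum_min_sInf (hQsum : ∀ w, ∑ a, Q a w = 1) :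
    alphaNeg Q = ∑ a, min (sInf (hbRate Q a '' {ζ | ζ 0 ≠ a}))
      (sInf (hbRate Q a '' {ζ | ζ 0 = a})) := by
  refine Finset.sum_congr rfl fun a _ => congrArg (min _) ?_
  exact one_sub_sSup_image_sum_compl_hbRate hQsum a ⟨fun _ => a, rfl⟩

theorem alphaHB_eq_iInf_sum_sInf (hQsum : ∀ w, ∑ a, Q a w = 1) (k : ℕ) :
    alphaHB Q k = ⨅ η, ∑ a, sInf (hbRate Q a '' cylinder k η) := by
  -- The infimum over `η` in `alphaHB` is taken over a set which unfolds to a range.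
  refine congrArg iInf (funext fun η => ?_)
  rw [Fintype.sum_eq_add_sum_compl (η 0), add_sub_assoc, add_comm]
  exact congrArg (· + _) <|
    one_sub_sSup_image_sum_compl_hbRate hQsum (η 0) ⟨η, self_mem_cylinder k η⟩

theorem alphaNeg_eq_sum_sInf_range [Nontrivial A] (hQsum : ∀ w, ∑ a, Q a w = 1) :
    alphaNeg Q = ∑ a, sInf (Set.range (Q a)) := by
  rw [alphaNeg_eq_sum_min_sInf hQsum]
  refine Finset.sum_congr rfl fun a _ => ?_
  have image_ne : hbRate Q a '' {ζ | ζ 0 ≠ a} = Set.range (Q a) :=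
    image_hbRate_origin_mem Q a (B := {a}ᶜ) (exists_ne a)
  have image_eq : hbRate Q a '' {ζ | ζ 0 = a} = Set.range (Q a) :=
    image_hbRate_origin_mem Q a (Set.singleton_nonempty a)
  rw [image_ne, image_eq, min_self]

theorem alphaHB_zero [Nonempty A] (hQsum : ∀ w, ∑ a, Q a w = 1) :
    alphaHB Q 0 = ∑ a, sInf (Set.range (Q a)) := by
  simp only [alphaHB_eq_iInf_sum_sInf hQsum, cylinder_zero,
    image_hbRate_origin_mem Q _ (Set.singleton_nonempty _), ciInf_const]

theorem alphaHB_of_one_le [Nonempty A] (hQsum : ∀ w, ∑ a, Q a w = 1) {k : ℕ} (hk : 1 ≤ k) :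
    alphaHB Q k = 1 := by
  have sum_rate (η : (Fin d → ℤ) → A) : ∑ a, hbRate Q a η = 1 := hQsum _
  simp only [alphaHB_eq_iInf_sum_sInf hQsum, image_hbRate_cylinder Q _ hk, csInf_singleton,
    sum_rate, ciInf_const]

theorem lamHB_one [Nonempty A] (hQsum : ∀ w, ∑ a, Q a w = 1) :
    lamHB Q 1 = 1 - ∑ a, sInf (Set.range (Q a)) := by
  simp [lamHB, alphaHB_of_one_le hQsum le_rfl, alphaHB_zero hQsum]

theorem lamHB_of_ne_one [Nontrivial A] (hQsum : ∀ w, ∑ a, Q a w = 1) {k : ℕ} (hk : k ≠ 1) :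
    lamHB Q k = 0 := by
  rcases Nat.eq_zero_or_pos k with rfl | hpos
  · simp [lamHB, alphaHB_zero hQsum, alphaNeg_eq_sum_sInf_range hQsum]
  · rw [lamHB, if_neg hpos.ne', alphaHB_of_one_le hQsum hpos,
      alphaHB_of_one_le hQsum (by lia), sub_self]

theorem tsum_ncard_mul_lamHB [Nontrivial A] (hQsum : ∀ w, ∑ a, Q a w = 1) :
    ∑' k : ℕ, ({j : Fin d → ℤ | norm1 j ≤ (k : ℤ)}.ncard : ℝ) * lamHB Q k
      = (2 * d + 1) * (1 - ∑ a, sInf (Set.range (Q a))) := by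
  rw [tsum_eq_single 1 fun k hk => by rw [lamHB_of_ne_one hQsum hk, mul_zero], lamHB_one hQsum,
    Nat.cast_one, ncard_setOf_norm1_le_one]
  push_cast
  rfl

end HeatBath

theorem heat_bath_summability_criterion_general
    {d : ℕ} {A : Type*} [Fintype A] [DecidableEq A] [Nontrivial A]
    {Q : A → (Bdry d → A) → ℝ} (hQsum : ∀ w, ∑ a, Q a w = 1) :
    (∑' k : ℕ, (({j : Fin d → ℤ | norm1 j ≤ (k : ℤ)}.ncard : ℝ) * lamHB Q k))
      = (2 * d + 1) * (1 - ∑ a : A, sInf (Set.range (Q a))) ∧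
    ((∑' k : ℕ, (({j : Fin d → ℤ | norm1 j ≤ (k : ℤ)}.ncard : ℝ) * lamHB Q k)) < 1
      ↔ (2 * d) / (2 * d + 1) < ∑ a : A, sInf (Set.range (Q a))) := by
  refine ⟨tsum_ncard_mul_lamHB hQsum, ?_⟩
  rw [tsum_ncard_mul_lamHB hQsum, div_lt_iff₀ (by positivity)]
  constructor <;> intro h <;> linarith

/-- for the heat-bath rates,
`Σ_{k≥0} |V_0(k)| λ(k) = (2d+1)(1 - Σ_{a∈A} min_{w∈A^{∂0}} Q(a,w))`; in particular
`Σ_{k≥0} |V_0(k)| λ(k) < 1` iff `Σ_{a∈A} min_{w∈A^{∂0}} Q(a,w) > 2d/(2d+1)`. -/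
theorem heat_bath_summability_criterion
    {d : ℕ} (hd : 1 ≤ d) (A : Type*) [Fintype A] [DecidableEq A]
    (hA : 2 ≤ Fintype.card A)
    (Q : A → (Bdry d → A) → ℝ)
    (hQ0 : ∀ a w, 0 ≤ Q a w) (hQ1 : ∀ a w, Q a w ≤ 1)
    (hQsum : ∀ w, ∑ a, Q a w = 1) :
    (∑' k : ℕ, (({j : Fin d → ℤ | norm1 j ≤ (k : ℤ)}.ncard : ℝ) * lamHB Q k))
      = (2 * d + 1) * (1 - ∑ a : A, sInf (Set.range (Q a))) ∧
    ((∑' k : ℕ, (({j : Fin d → ℤ | norm1 j ≤ (k : ℤ)}.ncard : ℝ) * lamHB Q k)) < 1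
      ↔ (2 * d) / (2 * d + 1) < ∑ a : A, sInf (Set.range (Q a))) := by
  have : Nontrivial A := Fintype.one_lt_card_iff_nontrivial.1 hA
  exact heat_bath_summability_criterion_general hQsum
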